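/- arXiv:1510.06700 — 2 statements merged into one kernel-verified Lean document; each statement's English description precedes it below -/
import Mathlib

section
/- Let F ⊆ {0,1}^n be defined by a constraint family ((V_j, Q_j))_{j∈J} in which every constraint relation Q_j is componentwise bijunctive, i.e. every connected component of the solution graph G(Q_j) is closed under the coordinatewise application of the ternary majority operation maj. If a, b ∈ F lie in the same connected component of the solution graph G(F), then d_F(a,b) = |a − b|, the Hamming distance between a and b. -/
/-- Coordinatewise majority operation on `Bool`. -/
def maj (x y z : Bool) : Bool := (x && y) || (y && z) || (z && x)

/-- One step in the solution graph of `R`: both endpoints are solutions and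
they differ in exactly one coordinate. -/
def stepR {ι : Type*} [Fintype ι] [DecidableEq ι] (R : Set (ι → Bool))
    (a b : ι → Bool) : Prop :=
  a ∈ R ∧ b ∈ R ∧ hammingDist a b = 1

/-- `a` and `b` are connected in the solution graph of `R`. -/
def connIn {ι : Type*} [Fintype ι] [DecidableEq ι] (R : Set (ι → Bool)) :
    (ι → Bool) → (ι → Bool) → Prop :=
  Relation.ReflTransGen (stepR R)

/-- There is a path of length `k` from `a` to `b` in the solution graph of `R`. -/
def hasPathLen {ι : Type*} [Fintype ι] [DecidableEq ι] (R : Set (ι → Bool)) :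
    ℕ → (ι → Bool) → (ι → Bool) → Prop
  | 0, a, b => a = b
  | k + 1, a, b => ∃ c, stepR R a c ∧ hasPathLen R k c b

/-- Shortest-path distance in the solution graph of `R`. -/
noncomputable def distIn {ι : Type*} [Fintype ι] [DecidableEq ι] (R : Set (ι → Bool))
    (a b : ι → Bool) : ℕ :=
  sInf {k | hasPathLen R k a b}

/-- The relation on `{0,1}^n` defined by a constraint family `((V j, Q j))_j`:
all restrictions to the constraint scopes must satisfy the constraints. -/
def famSet {n : ℕ} {J : Type*} (V : J → Finset (Fin n))
    (Q : ∀ j, Set ({i // i ∈ V j} → Bool)) : Set (Fin n → Bool) :=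
  {a | ∀ j, (fun i : {i // i ∈ V j} => a i.1) ∈ Q j}

/-!
The map `v ↦ maj(a, v, b)` retracts the cube onto the Hamming interval between `a` and `b`: it does
not increase Hamming distances and fixes both endpoints. If the majority of three vectors in one
component of `R` is a solution, it therefore turns any path of `R` from `a` to `b` into a path
inside the interval. The first step of such a path decreases the distance to `b`, and iterating
gives a path of length `|a - b|`. A conjunction of constraints inherits the closure property,
because restricting a path to the scope of a constraint gives a path, up to repeated vertices.
-/

section HammingCube

variable {ι : Type*}

/-- The coordinatewise majority of three Boolean vectors. -/
def majVec (a b c : ι → Bool) : ι → Bool :=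
  fun i => maj (a i) (b i) (c i)

theorem majVec_self_left (a b : ι → Bool) : majVec a a b = a :=
  funext fun i => (by decide : ∀ x y, maj x x y = x) (a i) (b i)

theorem majVec_self_right (a b : ι → Bool) : majVec a b b = b :=
  funext fun i => (by decide : ∀ x y, maj x y y = y) (a i) (b i)

variable [Fintype ι]

/-- The Hamming interval between `a` and `b`: the vectors lying on a geodesic of the cube from `a`
to `b`. -/
def hammingInterval (a b : ι → Bool) : Set (ι → Bool) :=
  {c | hammingDist a c + hammingDist c b = hammingDist a b}

theorem mem_hammingInterval {a b c : ι → Bool} :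
    c ∈ hammingInterval a b ↔ hammingDist a c + hammingDist c b = hammingDist a b :=
  Iff.rfl

theorem majVec_mem_hammingInterval (a v b : ι → Bool) : majVec a v b ∈ hammingInterval a b := by
  have coordinate : ∀ x y z : Bool, ((if x ≠ maj x y z then 1 else 0) +
      if maj x y z ≠ z then 1 else 0) = if x ≠ z then 1 else 0 := by decide
  simp only [mem_hammingInterval, hammingDist, Finset.card_filter,
    ← Finset.sum_add_distrib]
  exact Finset.sum_congr rfl fun i _ => coordinate (a i) (v i) (b i)

theorem hammingDist_majVec_le (a b u v : ι → Bool) :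
    hammingDist (majVec a u b) (majVec a v b) ≤ hammingDist u v :=
  hammingDist_comp_le_hammingDist fun i x => maj (a i) x (b i)

theorem hammingDist_comp_le_of_injective {κ β : Type*} [Fintype κ] [DecidableEq β] {f : κ → ι}
    (hf : Function.Injective f) (a b : ι → β) :
    hammingDist (a ∘ f) (b ∘ f) ≤ hammingDist a b :=
  Finset.card_le_card_of_injOn f (by simp [Set.MapsTo]) hf.injOn

end HammingCube

section SolutionGraph

variable {ι κ : Type*} [Fintype ι] [DecidableEq ι] [Fintype κ] [DecidableEq κ]
  {R S : Set (ι → Bool)} {a b : ι → Bool}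

theorem connIn.mem (h : connIn R a b) (ha : a ∈ R) : b ∈ R := by
  cases h with
  | refl => exact ha
  | tail _ hstep => exact hstep.2.1

theorem connIn.mono (h : connIn R a b) (hRS : R ⊆ S) : connIn S a b :=
  Relation.ReflTransGen.mono (fun _ _ hstep => ⟨hRS hstep.1, hRS hstep.2.1, hstep.2.2⟩) _ _ h

theorem connIn.map {T : Set (κ → Bool)} (h : connIn R a b) (φ : (ι → Bool) → κ → Bool)
    (hφ : ∀ u v, hammingDist (φ u) (φ v) ≤ hammingDist u v)
    (hT : ∀ v, connIn R a v → φ v ∈ T) : connIn T (φ a) (φ b) := by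
  induction h with
  | refl => exact .refl
  | @tail u v hau hstep ih =>
    by_cases heq : φ u = φ v
    · exact heq ▸ ih
    · have hle : hammingDist (φ u) (φ v) ≤ 1 := (hφ u v).trans_eq hstep.2.2
      have hpos : 0 < hammingDist (φ u) (φ v) := hammingDist_pos.2 heq
      exact ih.tail ⟨hT u hau, hT v (hau.tail hstep), by omega⟩

theorem hasPathLen.hammingDist_le {k : ℕ} (h : hasPathLen R k a b) : hammingDist a b ≤ k := by
  induction k generalizing a with
  | zero => exact (hammingDist_eq_zero.2 h).le
  | succ k ih =>
    obtain ⟨c, ⟨_, _, hac⟩, hcb⟩ := h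
    calc hammingDist a b ≤ hammingDist a c + hammingDist c b := hammingDist_triangle a c b
      _ ≤ k + 1 := by have := ih hcb; omega

/-- Componentwise bijunctive relations: the majority of three vectors from one connected component
is a solution. That it lies in the same component is then automatic, since `v ↦ majVec a v c` maps a
path from `a` to `b` to one from `a` to `majVec a b c`. -/
def IsComponentwiseBijunctive (R : Set (ι → Bool)) : Prop :=
  ∀ ⦃a b c⦄, a ∈ R → connIn R a b → connIn R a c → majVec a b c ∈ R

namespace IsComponentwiseBijunctive

theorem connIn_inter_hammingInterval (hR : IsComponentwiseBijunctive R) (ha : a ∈ R)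
    (h : connIn R a b) : connIn (R ∩ hammingInterval a b) a b := by
  have himage := h.map (T := R ∩ hammingInterval a b) (fun v => majVec a v b)
    (hammingDist_majVec_le a b)
    fun v hav => ⟨hR ha hav h, majVec_mem_hammingInterval a v b⟩
  simpa only [majVec_self_left, majVec_self_right] using himage

theorem exists_stepR_hammingDist_add_one (hR : IsComponentwiseBijunctive R) (ha : a ∈ R)
    (h : connIn R a b) (hne : a ≠ b) :
    ∃ c, stepR R a c ∧ connIn R c b ∧ hammingDist c b + 1 = hammingDist a b := by
  obtain heq | ⟨c, ⟨_, ⟨hc, hinterval⟩, hac⟩, hcb⟩ :=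
    (hR.connIn_inter_hammingInterval ha h).cases_head
  · exact absurd heq hne
  · rw [mem_hammingInterval] at hinterval
    exact ⟨c, ⟨ha, hc, hac⟩, connIn.mono hcb Set.inter_subset_left, by omega⟩

theorem hasPathLen_hammingDist (hR : IsComponentwiseBijunctive R) (ha : a ∈ R)
    (h : connIn R a b) : hasPathLen R (hammingDist a b) a b := by
  induction hk : hammingDist a b generalizing a with
  | zero => exact hammingDist_eq_zero.1 hk
  | succ k ih =>
    have hne : a ≠ b := hammingDist_pos.1 (by omega)
    obtain ⟨c, hac, hcb, hdist⟩ := hR.exists_stepR_hammingDist_add_one ha h hne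
    exact ⟨c, hac, ih hac.2.1 hcb (by omega)⟩

theorem distIn_eq_hammingDist (hR : IsComponentwiseBijunctive R) (ha : a ∈ R)
    (h : connIn R a b) : distIn R a b = hammingDist a b :=
  IsLeast.csInf_eq ⟨hR.hasPathLen_hammingDist ha h, fun _ hk => hasPathLen.hammingDist_le hk⟩

end IsComponentwiseBijunctive

end SolutionGraph

section ConstraintFamily

variable {n : ℕ} {J : Type*} {V : J → Finset (Fin n)} {Q : ∀ j, Set ({i // i ∈ V j} → Bool)}
  {a b : Fin n → Bool}

theorem connIn.restrict_famSet (h : connIn (famSet V Q) a b) (ha : a ∈ famSet V Q) (j : J) :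
    connIn (Q j) (a ∘ Subtype.val) (b ∘ Subtype.val) :=
  h.map (· ∘ Subtype.val) (hammingDist_comp_le_of_injective Subtype.val_injective)
    fun _ hav => hav.mem ha j

theorem isComponentwiseBijunctive_famSet (hQ : ∀ j, IsComponentwiseBijunctive (Q j)) :
    IsComponentwiseBijunctive (famSet V Q) :=
  fun _ _ _ ha hab hac j => hQ j (ha j) (hab.restrict_famSet ha j) (hac.restrict_famSet ha j)

end ConstraintFamily

theorem stmt1_general {n : ℕ} {J : Type*} (V : J → Finset (Fin n))
    (Q : ∀ j, Set ({i // i ∈ V j} → Bool)) (hQ : ∀ j, IsComponentwiseBijunctive (Q j))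
    (a b : Fin n → Bool) (ha : a ∈ famSet V Q) (hconn : connIn (famSet V Q) a b) :
    distIn (famSet V Q) a b = hammingDist a b :=
  (isComponentwiseBijunctive_famSet hQ).distIn_eq_hammingDist ha hconn

/-- If every constraint relation is componentwise bijunctive (every connected
component of its solution graph is closed under coordinatewise majority), then
in the solution graph of the defined relation no distance expands. -/
theorem stmt1 {n : ℕ} {J : Type*} [Fintype J]
    (V : J → Finset (Fin n)) (Q : ∀ j, Set ({i // i ∈ V j} → Bool))
    (hQ : ∀ j, ∀ a ∈ Q j, ∀ b ∈ Q j, ∀ c ∈ Q j,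
      connIn (Q j) a b → connIn (Q j) a c →
        (fun i => maj (a i) (b i) (c i)) ∈ Q j ∧
          connIn (Q j) a (fun i => maj (a i) (b i) (c i)))
    (a b : Fin n → Bool) (ha : a ∈ famSet V Q) (hb : b ∈ famSet V Q)
    (hconn : connIn (famSet V Q) a b) :
    distIn (famSet V Q) a b = hammingDist a b :=
  stmt1_general V Q (fun j _ _ _ ha hab hac =>
    (hQ j _ ha _ (hab.mem ha) _ (hac.mem ha) hab hac).1) a b ha hconn
end

section
/- Let F ⊆ {0,1}^n be defined by a constraint family ((V_j, Q_j))_{j∈J} in which every constraint relation Q_j is OR-free. Then the diameter of every connected component of the solution graph G(F) is at most 2n: whenever a, b ∈ F are connected in G(F), d_F(a,b) ≤ 2n. -/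
/-- `Q` is OR-free: the binary relation OR = {01, 10, 11} cannot be obtained
from `Q` by substituting constants at all remaining coordinates. -/
def orFree {ι : Type*} [DecidableEq ι] (Q : Set (ι → Bool)) : Prop :=
  ¬ ∃ (i j : ι) (t : ι → Bool), i ≠ j ∧
      ∀ x y : Bool,
        (Function.update (Function.update t i x) j y ∈ Q ↔ (x || y) = true)

/-! A conjunction of OR-free constraints is OR-free: if substituting constants in it gave OR, then
so would substituting them in a constraint violated by the excluded vector.

Direct the edges of the solution graph of an OR-free relation downwards, each edge turning one
`true` into `false`. If a solution has two downward edges, at coordinates `i ≠ j`, then OR-freeness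
forces the vector with both coordinates lowered to be a solution as well, so the downward steps have
the diamond property. By Church–Rosser, connected solutions have a common descendant, and a
descending path has at most as many steps as there are coordinates. -/

section OrFree

variable {ι κ : Type*} [DecidableEq ι] [DecidableEq κ]

theorem orFree_iff {Q : Set (ι → Bool)} :
    orFree Q ↔ ∀ (i j : ι) (t : ι → Bool), i ≠ j →
      Function.update (Function.update t i true) j true ∈ Q →
      Function.update (Function.update t i true) j false ∈ Q →
      Function.update (Function.update t i false) j true ∈ Q →
      Function.update (Function.update t i false) j false ∈ Q := by
  simp only [orFree, Bool.forall_bool, Bool.or_false, Bool.or_true]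
  grind

theorem orFree_iInter {J : Type*} {Q : J → Set (ι → Bool)} (hQ : ∀ j, orFree (Q j)) :
    orFree (⋂ j, Q j) := by
  simp only [orFree_iff, Set.mem_iInter] at hQ ⊢
  exact fun i k t hik h₁₁ h₁₀ h₀₁ j => hQ j i k t hik (h₁₁ j) (h₁₀ j) (h₀₁ j)

theorem orFree.preimage_comp {Q : Set (κ → Bool)} (hQ : orFree Q) {f : κ → ι}
    (hf : Function.Injective f) : orFree ((· ∘ f) ⁻¹' Q) := by
  rw [orFree_iff] at hQ ⊢
  intro i j t hij h₁₁ h₁₀ h₀₁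
  simp only [Set.mem_preimage] at *
  by_cases hj : j ∈ Set.range f
  · obtain ⟨j, rfl⟩ := hj
    simp only [Function.update_comp_eq_of_injective _ hf] at *
    by_cases hi : i ∈ Set.range f
    · obtain ⟨i, rfl⟩ := hi
      simp only [Function.update_comp_eq_of_injective _ hf] at *
      exact hQ i j _ (ne_of_apply_ne f hij) h₁₁ h₁₀ h₀₁
    · rwa [Function.update_comp_eq_of_notMem_range _ _ hi] at h₁₀ ⊢
  · rwa [Function.update_comp_eq_of_notMem_range _ _ hj] at h₀₁ ⊢

theorem orFree_famSet {n : ℕ} {J : Type*} {V : J → Finset (Fin n)}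
    {Q : ∀ j, Set ({i // i ∈ V j} → Bool)} (hQ : ∀ j, orFree (Q j)) : orFree (famSet V Q) := by
  have famSet_eq : famSet V Q = ⋂ j, (· ∘ Subtype.val) ⁻¹' Q j := by
    ext a
    rw [Set.mem_iInter]
    rfl
  rw [famSet_eq]
  exact orFree_iInter fun j => (hQ j).preimage_comp Subtype.val_injective

end OrFree

section SolutionGraph

variable {ι : Type*} [Fintype ι] [DecidableEq ι] {R : Set (ι → Bool)} {a b c : ι → Bool} {k m : ℕ}

theorem stepR.symm (h : stepR R a b) : stepR R b a :=
  ⟨h.2.1, h.1, hammingDist_comm a b ▸ h.2.2⟩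

theorem hasPathLen.trans (hab : hasPathLen R k a b) (hbc : hasPathLen R m b c) :
    hasPathLen R (k + m) a c := by
  induction k generalizing a with
  | zero =>
    obtain rfl : a = b := hab
    rwa [Nat.zero_add]
  | succ k ih =>
    obtain ⟨d, had, hdb⟩ := hab
    rw [Nat.succ_add]
    exact ⟨d, had, ih hdb⟩

theorem hasPathLen.symm (h : hasPathLen R k a b) : hasPathLen R k b a := by
  induction k generalizing a with
  | zero => exact Eq.symm h
  | succ k ih =>
    obtain ⟨c, hac, hcb⟩ := h
    exact (ih hcb).trans (m := 1) ⟨a, hac.symm, rfl⟩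

theorem distIn_le_of_hasPathLen (h : hasPathLen R k a b) : distIn R a b ≤ k :=
  Nat.sInf_le h

end SolutionGraph

/-- A downward edge of the solution graph of `R`: a step between solutions which turns one
coordinate from `true` to `false`. -/
def downStep {ι : Type*} [DecidableEq ι] (R : Set (ι → Bool)) (a b : ι → Bool) : Prop :=
  a ∈ R ∧ b ∈ R ∧ ∃ i, a i = true ∧ b = Function.update a i false

section DownStep

variable {ι : Type*} [DecidableEq ι] {R : Set (ι → Bool)} {a b c : ι → Bool}

theorem orFree.downStep_diamond (hR : orFree R) (hab : downStep R a b) (hac : downStep R a c) :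
    ∃ d, Relation.ReflGen (downStep R) b d ∧ Relation.ReflGen (downStep R) c d := by
  obtain ⟨ha, hb, i, hai, rfl⟩ := hab
  obtain ⟨-, hc, j, haj, rfl⟩ := hac
  obtain rfl | hij := eq_or_ne i j
  · exact ⟨_, .refl, .refl⟩
  have hi : Function.update a i true = a := Function.update_eq_self_iff.2 hai.symm
  have hj : Function.update a j true = a := Function.update_eq_self_iff.2 haj.symm
  have hd : Function.update (Function.update a i false) j false ∈ R := by
    refine orFree_iff.1 hR i j a hij ?_ ?_ ?_
    · rwa [hi, hj]
    · rwa [hi]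
    · rwa [Function.update_comm hij, hj]
  refine ⟨_, .single ⟨hb, hd, j, ?_, rfl⟩, .single ⟨hc, hd, i, ?_, Function.update_comm hij _ _ _⟩⟩
  · rwa [Function.update_of_ne hij.symm]
  · rwa [Function.update_of_ne hij]

variable [Fintype ι]

theorem downStep.stepR (h : downStep R a b) : stepR R a b := by
  obtain ⟨ha, hb, i, hai, rfl⟩ := h
  refine ⟨ha, hb, Finset.card_eq_one.2 ⟨i, ?_⟩⟩
  ext l
  obtain rfl | hl := eq_or_ne l i <;> simp [*]

theorem stepR.downStep_or_downStep (h : stepR R a b) : downStep R a b ∨ downStep R b a := by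
  obtain ⟨ha, hb, hdist⟩ := h
  obtain ⟨i, hi⟩ := Finset.card_eq_one.1 hdist
  have hne : ∀ l, a l ≠ b l ↔ l = i := by simpa [Finset.ext_iff] using hi
  have heq : ∀ l, l ≠ i → a l = b l := fun l hl => not_ne_iff.1 (mt (hne l).1 hl)
  have hii : a i ≠ b i := (hne i).2 rfl
  cases hai : a i with
  | false =>
    have hbi : b i = true := by simpa [hai] using hii.symm
    exact .inr ⟨hb, ha, i, hbi, Function.eq_update_iff.2 ⟨hai, heq⟩⟩
  | true =>
    have hbi : b i = false := by simpa [hai] using hii.symm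
    exact .inl ⟨ha, hb, i, hai, Function.eq_update_iff.2 ⟨hbi, fun l hl => (heq l hl).symm⟩⟩

theorem downStep.card_true_lt (h : downStep R a b) :
    Finset.card {i | b i = true} < Finset.card {i | a i = true} := by
  obtain ⟨-, -, i, hai, rfl⟩ := h
  refine Finset.card_lt_card (Finset.ssubset_iff_of_subset ?_ |>.2 ⟨i, by simpa using hai, by simp⟩)
  intro l hl
  obtain rfl | hli := eq_or_ne l i <;> simp_all

theorem exists_hasPathLen_le_card_true (h : Relation.ReflTransGen (downStep R) a b) :
    ∃ k ≤ Finset.card {i | a i = true}, hasPathLen R k a b := by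
  induction h using Relation.ReflTransGen.head_induction_on with
  | refl => exact ⟨0, Nat.zero_le _, rfl⟩
  | head hac _ ih =>
    obtain ⟨k, hk, hpath⟩ := ih
    exact ⟨k + 1, hk.trans_lt hac.card_true_lt, _, hac.stepR, hpath⟩

theorem orFree.join_downStep_of_connIn (hR : orFree R) (hab : connIn R a b) :
    Relation.Join (Relation.ReflTransGen (downStep R)) a b := by
  refine Relation.reflTransGen_le_of_equivalence_of_le
    (Relation.equivalence_join_reflTransGen fun x y z hxy hxz => ?_) (fun x y hxy => ?_) _ _ hab
  · obtain ⟨d, hyd, hzd⟩ := hR.downStep_diamond hxy hxz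
    exact ⟨d, hyd, hzd.to_reflTransGen⟩
  · obtain h | h := hxy.downStep_or_downStep
    · exact ⟨y, .single h, .refl⟩
    · exact ⟨x, .refl, .single h⟩

end DownStep

theorem stmt3_general {ι : Type*} [Fintype ι] [DecidableEq ι] {F : Set (ι → Bool)}
    (hF : orFree F) {a b : ι → Bool} (hab : connIn F a b) :
    distIn F a b ≤ 2 * Fintype.card ι := by
  obtain ⟨c, hac, hbc⟩ := hF.join_downStep_of_connIn hab
  obtain ⟨k, hk, hpath_ac⟩ := exists_hasPathLen_le_card_true hac
  obtain ⟨m, hm, hpath_bc⟩ := exists_hasPathLen_le_card_true hbc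
  calc distIn F a b ≤ k + m := distIn_le_of_hasPathLen (hpath_ac.trans hpath_bc.symm)
    _ ≤ Fintype.card ι + Fintype.card ι :=
        add_le_add (hk.trans (Finset.card_le_univ _)) (hm.trans (Finset.card_le_univ _))
    _ = 2 * Fintype.card ι := (two_mul _).symm

/-- If every constraint relation is OR-free, the diameter of every connected
component of the solution graph of the defined relation is at most `2 * n`. -/
theorem stmt3 {n : ℕ} {J : Type*} [Fintype J]
    (V : J → Finset (Fin n)) (Q : ∀ j, Set ({i // i ∈ V j} → Bool))
    (hQ : ∀ j, orFree (Q j)) :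
    ∀ a ∈ famSet V Q, ∀ b ∈ famSet V Q, connIn (famSet V Q) a b →
      distIn (famSet V Q) a b ≤ 2 * n := by
  intro a _ b _ hab
  simpa only [Fintype.card_fin] using stmt3_general (orFree_famSet hQ) hab
end
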